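/- Assume MA(σ-centered). Then there exists a subgroup G of Sym(Ω), for Ω countably infinite, which is proper, dense in the topology of pointwise convergence, and such that for every pair of isomorphic inductively flexible structures M, M′ with universe Ω there exists f ∈ G which is an isomorphism from M to M′. In particular G acts transitively on the set of all structures on Ω isomorphic to any fixed inductively flexible structure. -/

import Mathlib

def StronglyIndependent {Ω : Type} (G : Set (Equiv.Perm Ω)) : Prop :=
  ∀ (n : ℕ) (w : FreeGroup (Fin (n + 1))), w ≠ 1 →
    ∀ f : Fin (n + 1) → Equiv.Perm Ω, Function.Injective f → (∀ i, f i ∈ G) →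
      {x : Ω | FreeGroup.lift f w x = x}.Finite

def FlexibleWitness {Ω : Type} (Aut : Set (Equiv.Perm Ω)) (F : Set (Set (Ω × Ω))) : Prop :=
  (∀ f ∈ F, Set.Finite f) ∧
  (∀ f ∈ F, ∃ g ∈ Aut, ∀ p ∈ f, g p.1 = p.2) ∧
  ∅ ∈ F ∧
  (∀ f ∈ F, Prod.swap '' f ∈ F) ∧
  (∀ f ∈ F, ∀ a : Ω, a ∉ Prod.fst '' f → {b : Ω | insert (a, b) f ∈ F}.Infinite)

/-- A relational structure on universe `Ω` with relation symbols indexed by `I` of arities `ar`. -/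
structure RelStruct (Ω I : Type) (ar : I → ℕ) where
  rel : ∀ i : I, (Fin (ar i) → Ω) → Prop

/-- `g` is an isomorphism from `M` to `N` (both with universe `Ω`), by transport of structure. -/
def IsIso {Ω I : Type} {ar : I → ℕ} (g : Equiv.Perm Ω) (M N : RelStruct Ω I ar) : Prop :=
  ∀ (i : I) (t : Fin (ar i) → Ω), N.rel i (fun k => g (t k)) ↔ M.rel i t

def InductivelyFlexible {Ω I : Type} {ar : I → ℕ} (M : RelStruct Ω I ar) : Prop :=
  ∃ F : Set (Set (Ω × Ω)), FlexibleWitness {g | IsIso g M M} F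

def Centered {P : Type} [Preorder P] (Q : Set P) : Prop :=
  ∀ S : Finset P, ↑S ⊆ Q → ∃ p : P, ∀ q ∈ S, q ≤ p

def SigmaCentered (P : Type) [Preorder P] : Prop :=
  ∃ C : ℕ → Set P, (∀ n, Centered (C n)) ∧ (⋃ n, C n) = Set.univ

/-- Martin's Axiom for σ-centered partial orders: for any nonempty σ-centered partial order
and any family of fewer than continuum many open dense subsets, there is a filter meeting
every member of the family. -/
def MASigmaCentered : Prop :=
  ∀ (P : Type) [Preorder P], Nonempty P → SigmaCentered P →
    ∀ 𝒟 : Set (Set P),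
      (∀ D ∈ 𝒟, (∀ p ∈ D, ∀ q, p ≤ q → q ∈ D) ∧ (∀ p, ∃ q ∈ D, p ≤ q)) →
      Cardinal.mk ↥𝒟 < Cardinal.continuum →
      ∃ Q : Set P, Q.Nonempty ∧
        (∀ q₀ ∈ Q, ∀ q₁ ∈ Q, ∃ q ∈ Q, q₀ ≤ q ∧ q₁ ≤ q) ∧
        (∀ p q : P, p ≤ q → q ∈ Q → p ∈ Q) ∧
        ∀ D ∈ 𝒟, (Q ∩ D).Nonempty

/-!
The group is the union of a chain of cofinitary groups (every nontrivial element has finitely many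
fixed points), built by transfinite recursion of length continuum over all families of finite
partial injections with the infinite-extension property. A stage of the recursion adjoins to a
cofinitary group `G` with fewer than continuum many elements a permutation `f` which is locally in
the given family. It is read off a sufficiently generic filter of pairs `(p, W)` with `p` in the
family and `W` a finite set of cyclically reduced words over `G` in an unknown `f`, where a stronger
condition may not create closed paths along words of `W`; there are only countably many `p`, so this
order is σ-centered. Every element of `⟨G, f⟩` is conjugate to an element of `G` or to a cyclically
reduced word, whose fixed points all come from the finitely many closed paths of a single condition.
Adding to `p` an edge with a fresh endpoint `c` creates no closed path along a cyclically reduced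
word: `c` has no other incident edge, so a path through `c` would have to turn back, which a letter
of `G` that moves `c` excludes.

A cofinitary group is proper since transpositions have cofinitely many fixed points. Composing
partial automorphisms of `M` with an isomorphism `M ≅ M'` gives a family whose limits are
isomorphisms, and the finite partial injections extending a given one give density.
-/

open Cardinal MulAction

universe u

section Endpoint

variable {Ω : Type*}

/-- The first (`b = true`) or second (`b = false`) entry of a pair. Indexing by `Bool` treats a
partial injection and its inverse, and the letters `f` and `f⁻¹`, uniformly. -/
def endpoint (b : Bool) (e : Ω × Ω) : Ω := bif b then e.1 else e.2

/-- The pair `e` with `endpoint b e = x` and `endpoint (!b) e = y`. -/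
def edge (b : Bool) (x y : Ω) : Ω × Ω := bif b then (x, y) else (y, x)

@[simp]
theorem endpoint_edge (b : Bool) (x y : Ω) : endpoint b (edge b x y) = x := by
  cases b <;> rfl

@[simp]
theorem endpoint_not_edge (b : Bool) (x y : Ω) : endpoint (!b) (edge b x y) = y := by
  cases b <;> rfl

end Endpoint

section Cofinitary

/-- A group action is cofinitary if every nontrivial group element has finitely many fixed
points. -/
def IsCofinitary (G Ω : Type*) [Group G] [MulAction G Ω] : Prop :=
  ∀ g : G, g ≠ 1 → (fixedBy Ω g).Finite

theorem isCofinitary_subgroup_iff {Ω : Type*} {G : Subgroup (Equiv.Perm Ω)} :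
    IsCofinitary G Ω ↔ ∀ k ∈ G, k ≠ 1 → (fixedBy Ω k).Finite :=
  ⟨fun h k hk hk1 => h ⟨k, hk⟩ (by simpa using hk1), fun h k hk1 => h k k.2 (by simpa using hk1)⟩

theorem not_isCofinitary_top (Ω : Type*) [Infinite Ω] :
    ¬ IsCofinitary (⊤ : Subgroup (Equiv.Perm Ω)) Ω := by
  classical
  intro h
  obtain ⟨a, b, hab⟩ := exists_pair_ne Ω
  have hswap : (fixedBy Ω (Equiv.swap a b)).Finite :=
    isCofinitary_subgroup_iff.1 h _ (Subgroup.mem_top _) (mt Equiv.swap_eq_one_iff.1 hab)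
  refine (Set.toFinite {a, b}).infinite_compl (hswap.subset fun x hx => ?_)
  simp only [Set.mem_compl_iff, Set.mem_insert_iff, Set.mem_singleton_iff, not_or] at hx
  exact Equiv.swap_apply_of_ne_of_ne hx.1 hx.2

theorem finite_fixedBy_of_isConj {G Ω : Type*} [Group G] [MulAction G Ω] {g h : G}
    (hgh : IsConj g h) (hg : (fixedBy Ω g).Finite) : (fixedBy Ω h).Finite := by
  obtain ⟨c, rfl⟩ := isConj_iff.1 hgh
  rw [← smul_fixedBy]
  exact hg.smul_set

variable {G Ω : Type*} [Group G] [MulAction G Ω]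

/-- The point `c` is fresh over `D` for `g` if `g` neither fixes `c` (unless `g = 1`) nor connects
`c` to a point of `D` in either direction. -/
def IsFresh (D : Set Ω) (g : G) (c : Ω) : Prop :=
  g • c ∉ D ∧ g⁻¹ • c ∉ D ∧ (g • c = c → g = 1)

theorem IsCofinitary.finite_not_isFresh (hG : IsCofinitary G Ω) {D : Set Ω} (hD : D.Finite)
    (g : G) : {c : Ω | ¬ IsFresh D g c}.Finite := by
  have hfix : {c : Ω | g • c = c ∧ g ≠ 1}.Finite := by
    by_cases hg : g = 1
    · simp [hg]
    · exact (hG g hg).subset fun c hc => hc.1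
  refine (((hD.preimage (MulAction.injective g).injOn).union
    (hD.preimage (MulAction.injective g⁻¹).injOn)).union hfix).subset fun c hc => ?_
  simp only [IsFresh, Set.mem_ofPred_eq] at hc
  simp only [Set.mem_union, Set.mem_preimage, Set.mem_ofPred_eq]
  tauto

theorem IsCofinitary.exists_isFresh (hG : IsCofinitary G Ω) {D S : Set Ω} {T : Set G}
    (hD : D.Finite) (hT : T.Finite) (hS : S.Infinite) :
    ∃ c ∈ S, c ∉ D ∧ ∀ g ∈ T, IsFresh D g c := by
  obtain ⟨c, hcS, hc⟩ :=
    (hS.sdiff (hD.union (hT.biUnion fun g _ => hG.finite_not_isFresh hD g))).nonempty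
  simp only [Set.mem_union, Set.mem_iUnion, Set.mem_ofPred_eq, not_or, not_exists, not_not] at hc
  exact ⟨c, hcS, hc⟩

end Cofinitary

section ClosedPath

variable {G Ω ι : Type*} [Group G] [MulAction G Ω]

/-- A closed path along the cyclic word `w`, whose letter `(g, true)` stands for `g * f` and
`(g, false)` for `g * f⁻¹` with `f` unknown. The permutation `σ` maps an index to the next one, and
`P i` is the pair in the graph of `f` that the `i`-th letter traverses. Words act from the left, so
a path is followed backwards along `σ`. -/
def IsClosedPath (σ : Equiv.Perm ι) (w : ι → G × Bool) (P : ι → Ω × Ω) : Prop :=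
  ∀ i, endpoint (w i).2 (P i) = (w (σ i)).1 • endpoint (!(w (σ i)).2) (P (σ i))

/-- Every closed path along the cyclic word `L` with edges in `q` has all its edges in `p`. -/
def NoNewClosedPaths (L : List (G × Bool)) (p q : Set (Ω × Ω)) : Prop :=
  ∀ P : Fin L.length → Ω × Ω, IsClosedPath (finRotate _) L.get P → (∀ i, P i ∈ q) → ∀ i, P i ∈ p

variable {σ : Equiv.Perm ι} {w : ι → G × Bool} {P : ι → Ω × Ω}

theorem IsClosedPath.endpoint_ne (hP : IsClosedPath σ w P) (hw : ∀ i, w (σ i) ≠ (1, !(w i).2))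
    {D : Set Ω} {c : Ω} {b : Bool} (hD : ∀ i b', endpoint b' (P i) ∈ insert c D)
    (hb : ∀ i b', endpoint b' (P i) = c → b' = b) (hc : ∀ i, IsFresh D (w i).1 c) (i : ι)
    (b' : Bool) : endpoint b' (P i) ≠ c := by
  have turn (j : ι) : endpoint (w j).2 (P j) ≠ c ∧ endpoint (!(w (σ j)).2) (P (σ j)) ≠ c := by
    obtain ⟨hgc, hgc', hfix⟩ := hc (σ j)
    have hstep := hP j
    have not_both : ¬ (endpoint (w j).2 (P j) = c ∧ endpoint (!(w (σ j)).2) (P (σ j)) = c) := by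
      rintro ⟨hx, hy⟩
      have hdir : (w j).2 = !(w (σ j)).2 := (hb _ _ hx).trans (hb _ _ hy).symm
      rw [hx, hy] at hstep
      exact hw j (Prod.ext (hfix hstep.symm) (by simp [hdir]))
    refine ⟨fun hx => ?_, fun hy => ?_⟩
    · have hy := (hD (σ j) _).resolve_left fun hy => not_both ⟨hx, hy⟩
      exact hgc' (by rwa [← hx, hstep, inv_smul_smul])
    · have hx := (hD j _).resolve_left fun hx => not_both ⟨hx, hy⟩
      exact hgc (by rwa [← hy, ← hstep])
  rcases Bool.eq_or_eq_not b' (w i).2 with rfl | rfl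
  · exact (turn i).1
  · simpa using (turn (σ.symm i)).2

theorem IsClosedPath.mem_of_mem_insert (hP : IsClosedPath σ w P)
    (hw : ∀ i, w (σ i) ≠ (1, !(w i).2)) {D : Set Ω} {p : Set (Ω × Ω)} {a c : Ω} {b : Bool}
    (ha : a ∈ D) (hcD : c ∉ D) (hpD : ∀ e ∈ p, ∀ b', endpoint b' e ∈ D)
    (hc : ∀ i, IsFresh D (w i).1 c) (hPp : ∀ i, P i ∈ insert (edge b a c) p) (i : ι) :
    P i ∈ p := by
  have hmem (j : ι) (b' : Bool) : endpoint b' (P j) ∈ D ∨ endpoint b' (P j) = c ∧ b' = !b := by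
    rcases hPp j with hj | hj
    · rcases Bool.eq_or_eq_not b' b with rfl | rfl <;> simp [hj, ha]
    · exact .inl (hpD _ hj b')
  refine (hPp i).resolve_left fun hi => ?_
  refine hP.endpoint_ne (D := D) (b := !b) hw (fun j b' => ?_) (fun j b' hj => ?_) hc i (!b)
    (by simp [hi])
  · exact (hmem j b').elim .inr fun h => .inl h.1
  · exact (hmem j b').elim (fun h => absurd (hj ▸ h) hcD) And.right

end ClosedPath

section Word

/-- No rotation of `L` begins with `g * f ^ ε * (1 * f ^ (-ε))`, so `L` admits no cyclic
cancellation. -/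
def CyclicallyReduced {G : Type*} [One G] (L : List (G × Bool)) : Prop :=
  ∀ (l : G × Bool) (M : List (G × Bool)), ¬ L ~r l :: (1, !l.2) :: M

theorem coe_finRotate_eq_mod {n : ℕ} (i : Fin n) : (finRotate n i : ℕ) = (i + 1) % n := by
  have := i.neZero
  rw [finRotate_apply, Fin.val_add, Fin.val_one', Nat.add_mod_mod]

theorem CyclicallyReduced.get_finRotate_ne {G : Type*} [One G] {L : List (G × Bool)}
    (hL : CyclicallyReduced L) (i : Fin L.length) :
    L.get (finRotate _ i) ≠ (1, !(L.get i).2) := by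
  intro h
  have hne : finRotate _ i ≠ i := fun hi => by simp [hi, Prod.ext_iff] at h
  have hlen : 2 ≤ L.length := by
    by_contra hlt
    have : Subsingleton (Fin L.length) := Fin.subsingleton_iff_le_one.2 (by lia)
    exact hne (Subsingleton.elim _ _)
  refine hL (L.get i) ((L.rotate i).drop 2) ⟨i, ?_⟩
  rw [← h]
  have h0 : (L.rotate i)[0]'(by simp; lia) = L.get i := by
    simp [List.getElem_rotate, Nat.mod_eq_of_lt i.2]
  have h1 : (L.rotate i)[1]'(by simp; lia) = L.get (finRotate _ i) := by
    rw [List.getElem_rotate, List.get_eq_getElem]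
    simp only [coe_finRotate_eq_mod, Nat.add_comm 1]
  rw [← h0, ← h1, List.getElem_cons_drop, List.getElem_cons_drop, List.drop_zero]

variable {K : Type*} [Group K] {G : Subgroup K}

/-- The value of a word at `f`. -/
def evalWord (f : K) (L : List (G × Bool)) : K :=
  (L.map fun l => (l.1 : K) * bif l.2 then f else f⁻¹).prod

@[simp]
theorem evalWord_nil (f : K) : evalWord f ([] : List (G × Bool)) = 1 := rfl

@[simp]
theorem evalWord_cons (f : K) (l : G × Bool) (L : List (G × Bool)) :
    evalWord f (l :: L) = l.1 * (bif l.2 then f else f⁻¹) * evalWord f L := by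
  simp [evalWord]

theorem evalWord_append (f : K) (L M : List (G × Bool)) :
    evalWord f (L ++ M) = evalWord f L * evalWord f M := by
  simp [evalWord]

theorem isConj_mul_swap (a b : K) : IsConj (a * b) (b * a) :=
  isConj_iff.2 ⟨b, by group⟩

theorem isConj_evalWord_of_isRotated {L M : List (G × Bool)} (h : L ~r M) (f : K) :
    IsConj (evalWord f L) (evalWord f M) := by
  obtain ⟨n, rfl⟩ := h
  rw [List.rotate_eq_drop_append_take_mod, evalWord_append]
  nth_rw 1 [← List.take_append_drop (n % L.length) L]
  rw [evalWord_append]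
  exact isConj_mul_swap _ _

theorem exists_eq_evalWord_mul_of_mem_closure_insert {f k : K}
    (hk : k ∈ Subgroup.closure (insert f (G : Set K))) :
    ∃ (L : List (G × Bool)) (g : G), k = evalWord f L * g := by
  induction hk using Subgroup.closure_induction_right with
  | one => exact ⟨[], 1, by simp⟩
  | mul_right x _ y hy ih =>
    obtain ⟨L, g, rfl⟩ := ih
    rcases hy with rfl | hy
    · exact ⟨L ++ [(g, true)], 1, by simp [evalWord_append, mul_assoc]⟩
    · exact ⟨L, g * ⟨y, hy⟩, by simp [mul_assoc]⟩
  | mul_inv_cancel x _ y hy ih =>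
    obtain ⟨L, g, rfl⟩ := ih
    rcases hy with rfl | hy
    · exact ⟨L ++ [(g, false)], 1, by simp [evalWord_append, mul_assoc]⟩
    · exact ⟨L, g * ⟨y, hy⟩⁻¹, by simp [mul_assoc]⟩

theorem isConj_mem_or_cyclicallyReduced_mul_evalWord (f : K) (g : G) (L : List (G × Bool)) :
    (∃ h ∈ G, IsConj h (g * evalWord f L)) ∨
      ∃ M : List (G × Bool), M ≠ [] ∧ CyclicallyReduced M ∧
        IsConj (evalWord f M) (g * evalWord f L) := by
  induction hn : L.length using Nat.strong_induction_on generalizing g L with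
  | _ n ih =>
  subst hn
  match L with
  | [] => exact .inl ⟨g, g.2, by rw [evalWord_nil, mul_one]⟩
  | l :: L =>
    have absorb : g * evalWord f (l :: L) = evalWord f ((g * l.1, l.2) :: L) := by
      simp [mul_assoc]
    rw [absorb]
    by_cases hred : CyclicallyReduced ((g * l.1, l.2) :: L)
    · exact .inr ⟨_, by simp, hred, .refl _⟩
    obtain ⟨m, M, hrot⟩ : ∃ m M, ((g * l.1, l.2) :: L) ~r m :: (1, !m.2) :: M := by
      unfold CyclicallyReduced at hred
      push Not at hred
      exact hred
    have cancel : evalWord f (m :: (1, !m.2) :: M) = m.1 * evalWord f M := by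
      cases hm : m.2 <;> simp [hm, mul_assoc]
    have hconj := (isConj_evalWord_of_isRotated hrot f).symm
    rw [cancel] at hconj
    have hlen : M.length < (l :: L).length := by
      have := hrot.perm.length_eq
      simp only [List.length_cons] at this ⊢
      lia
    rcases ih _ hlen m.1 M rfl with ⟨h, hh, hc⟩ | ⟨N, hN, hNred, hc⟩
    · exact .inl ⟨h, hh, hc.trans hconj⟩
    · exact .inr ⟨N, hN, hNred, hc.trans hconj⟩

theorem isConj_mem_or_cyclicallyReduced_of_mem_closure_insert {f k : K}
    (hk : k ∈ Subgroup.closure (insert f (G : Set K))) :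
    (∃ h ∈ G, IsConj h k) ∨
      ∃ L : List (G × Bool), L ≠ [] ∧ CyclicallyReduced L ∧ IsConj (evalWord f L) k := by
  obtain ⟨L, g, rfl⟩ := exists_eq_evalWord_mul_of_mem_closure_insert hk
  have hswap := isConj_mul_swap (g : K) (evalWord f L)
  rcases isConj_mem_or_cyclicallyReduced_mul_evalWord f g L with ⟨h, hh, hc⟩ | ⟨M, hM, hred, hc⟩
  · exact .inl ⟨h, hh, hc.trans hswap⟩
  · exact .inr ⟨M, hM, hred, hc.trans hswap⟩

end Word

section FixedPoints

variable {Ω : Type*} {G : Subgroup (Equiv.Perm Ω)} {f : Equiv.Perm Ω} {L : List (G × Bool)}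

theorem evalWord_drop_finRotate {z : Ω} (hz : evalWord f L z = z) (i : Fin L.length) :
    evalWord f (L.drop (finRotate _ i)) z = evalWord f (L.drop (i + 1)) z := by
  rw [coe_finRotate_eq_mod]
  rcases Nat.lt_or_ge (i + 1) L.length with hi | hi
  · rw [Nat.mod_eq_of_lt hi]
  · rw [show (i : ℕ) + 1 = L.length by lia, Nat.mod_self, List.drop_length, List.drop_zero, hz]
    rfl

theorem edge_mem_graph (f : Equiv.Perm Ω) (b : Bool) (y : Ω) :
    edge b y ((bif b then f else f⁻¹) y) ∈ Function.graph f := by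
  cases b <;> simp [edge]

theorem exists_isClosedPath_of_evalWord_apply_eq_self {z : Ω} (hz : evalWord f L z = z) :
    ∃ P : Fin L.length → Ω × Ω, IsClosedPath (finRotate _) L.get P ∧
      (∀ i, P i ∈ Function.graph f) ∧
      ∀ i : Fin L.length,
        evalWord f (L.drop i) z = (L.get i).1 • endpoint (!(L.get i).2) (P i) := by
  let y (i : Fin L.length) : Ω := evalWord f (L.drop (i + 1)) z
  let P (i : Fin L.length) : Ω × Ω :=
    edge (L.get i).2 (y i) ((bif (L.get i).2 then f else f⁻¹) (y i))
  have hdrop (i : Fin L.length) :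
      evalWord f (L.drop i) z = (L.get i).1 • endpoint (!(L.get i).2) (P i) := by
    rw [List.drop_eq_getElem_cons i.2, evalWord_cons, endpoint_not_edge]
    rfl
  refine ⟨P, fun i => ?_, fun i => ?_, hdrop⟩
  · rw [← hdrop, evalWord_drop_finRotate hz, endpoint_edge]
  · exact edge_mem_graph f _ _

theorem NoNewClosedPaths.finite_fixedBy_evalWord {p : Set (Ω × Ω)}
    (h : NoNewClosedPaths L p (Function.graph f)) (hp : p.Finite) (hL : L ≠ []) :
    (fixedBy Ω (evalWord f L)).Finite := by
  let i₀ : Fin L.length := ⟨0, List.length_pos_iff.2 hL⟩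
  refine (hp.image fun e => (L.get i₀).1 • endpoint (!(L.get i₀).2) e).subset fun z hz => ?_
  obtain ⟨P, hP, hPf, hPz⟩ := exists_isClosedPath_of_evalWord_apply_eq_self hz
  exact ⟨P i₀, h P hP hPf i₀, by simpa [i₀, show evalWord f L z = z from hz] using (hPz i₀).symm⟩

end FixedPoints

section Extensible

variable {Ω : Type*}

/-- A nonempty family of finite partial injections in which every member extends, by infinitely
many choices of a value, to any new point of the domain (`b = true`) or range (`b = false`). -/
structure IsExtensible (F : Set (Set (Ω × Ω))) : Prop where
  nonempty : F.Nonempty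
  finite : ∀ p ∈ F, p.Finite
  injOn : ∀ p ∈ F, ∀ b, p.InjOn (endpoint b)
  infinite : ∀ p ∈ F, ∀ b, ∀ a ∉ endpoint b '' p, {c | insert (edge b a c) p ∈ F}.Infinite

theorem isExtensible_finite_injOn [Infinite Ω] :
    IsExtensible {p : Set (Ω × Ω) | p.Finite ∧ ∀ b, p.InjOn (endpoint b)} where
  nonempty := ⟨∅, Set.finite_empty, fun _ => Set.injOn_empty _⟩
  finite _ hp := hp.1
  injOn _ hp := hp.2
  infinite p hp b a ha := by
    refine (hp.1.image (endpoint !b)).infinite_compl.mono fun c hc => ⟨hp.1.insert _, fun b' => ?_⟩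
    rw [Set.injOn_insert fun h => ha ⟨_, h, endpoint_edge b a c⟩]
    refine ⟨hp.2 b', ?_⟩
    rcases Bool.eq_or_eq_not b' b with rfl | rfl
    · rwa [endpoint_edge]
    · rwa [endpoint_not_edge]

theorem IsExtensible.sep_superset {F : Set (Set (Ω × Ω))} (hF : IsExtensible F) {p₀ : Set (Ω × Ω)}
    (hp₀ : p₀ ∈ F) : IsExtensible {p ∈ F | p₀ ⊆ p} where
  nonempty := ⟨p₀, hp₀, subset_rfl⟩
  finite p hp := hF.finite p hp.1
  injOn p hp := hF.injOn p hp.1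
  infinite p hp b a ha := (hF.infinite p hp.1 b a ha).mono fun _ hc =>
    ⟨hc, hp.2.trans (Set.subset_insert _ _)⟩

theorem IsExtensible.image_prodMap {F : Set (Set (Ω × Ω))} (hF : IsExtensible F)
    (g h : Equiv.Perm Ω) : IsExtensible ((Prod.map g h '' ·) '' F) where
  nonempty := hF.nonempty.image _
  finite := Set.forall_mem_image.2 fun p hp => (hF.finite p hp).image _
  injOn := Set.forall_mem_image.2 fun p hp b => by
    refine Set.InjOn.image_of_comp fun x hx y hy hxy => hF.injOn p hp b hx hy ?_
    cases b
    · exact h.injective hxy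
    · exact g.injective hxy
  infinite := Set.forall_mem_image.2 fun p hp b a ha => by
    let u : Equiv.Perm Ω := bif b then g else h
    let v : Equiv.Perm Ω := bif b then h else g
    have endpoint_map (e : Ω × Ω) : endpoint b (Prod.map g h e) = u (endpoint b e) := by
      cases b <;> rfl
    have map_edge (x y : Ω) : Prod.map g h (edge b x y) = edge b (u x) (v y) := by
      cases b <;> rfl
    have ha' : u.symm a ∉ endpoint b '' p := by
      rintro ⟨e, he, hea⟩
      exact ha ⟨_, Set.mem_image_of_mem _ he, by rw [endpoint_map, hea, u.apply_symm_apply]⟩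
    refine ((hF.infinite p hp b _ ha').image v.injective.injOn).mono ?_
    rintro _ ⟨c, hc, rfl⟩
    exact ⟨_, hc, by simp [Set.image_insert_eq, map_edge]⟩

theorem injOn_endpoint_graph (g : Equiv.Perm Ω) (b : Bool) :
    (Function.graph g).InjOn (endpoint b) := by
  rintro ⟨x, _⟩ rfl ⟨y, _⟩ rfl hxy
  cases b
  · rw [g.injective hxy]
  · rw [show x = y from hxy]

theorem FlexibleWitness.isExtensible {Ω : Type} {A : Set (Equiv.Perm Ω)} {F : Set (Set (Ω × Ω))}
    (hF : FlexibleWitness A F) : IsExtensible F := by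
  obtain ⟨hfin, hA, hempty, hswap, hinf⟩ := hF
  refine ⟨⟨∅, hempty⟩, hfin, fun p hp b => ?_, fun p hp b a ha => ?_⟩
  · obtain ⟨g, -, hg⟩ := hA p hp
    exact (injOn_endpoint_graph g b).mono hg
  · cases b
    · have ha' : a ∉ Prod.fst '' (Prod.swap '' p) := by rwa [Set.image_image]
      refine (hinf _ (hswap p hp) a ha').mono fun c hc => ?_
      simpa [Set.image_insert_eq, Set.image_image, edge] using hswap _ hc
    · exact hinf p hp a ha

/-- The permutation `f` is a limit of the family `F`: its graph is exhausted by members of `F`. -/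
def IsLocallyIn (f : Equiv.Perm Ω) (F : Set (Set (Ω × Ω))) : Prop :=
  ∀ D : Set Ω, D.Finite → ∃ p ∈ F, p ⊆ Function.graph f ∧ ∀ a ∈ D, (a, f a) ∈ p

end Extensible

section MartinsAxiom

theorem MASigmaCentered.exists_generic (hMA : MASigmaCentered) {P : Type} [Preorder P] [Nonempty P]
    (hP : SigmaCentered P) {ι : Type} (hι : #ι < 𝔠) {D : ι → Set P} (hup : ∀ i, IsUpperSet (D i))
    (hcof : ∀ i, IsCofinal (D i)) :
    ∃ Q : Set P, Q.Nonempty ∧ DirectedOn (· ≤ ·) Q ∧ ∀ i, (Q ∩ D i).Nonempty := by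
  obtain ⟨Q, hne, hdir, -, hQ⟩ := hMA P ‹_› hP (Set.range D)
    (Set.forall_mem_range.2 fun i => ⟨fun _ hp _ hpq => hup i hpq hp, hcof i⟩)
    (mk_range_le.trans_lt hι)
  exact ⟨Q, hne, hdir, fun i => hQ _ (Set.mem_range_self i)⟩

theorem sigmaCentered_of_centered_fibers {P : Type} [Preorder P] [Nonempty P] {β : Type*}
    [Countable β] (π : P → β) (h : ∀ b, Centered (π ⁻¹' {b})) : SigmaCentered P := by
  have : Nonempty β := ‹Nonempty P›.map π
  obtain ⟨e, he⟩ := exists_surjective_nat β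
  refine ⟨fun n => π ⁻¹' {e n}, fun n => h _, Set.eq_univ_of_forall fun p => Set.mem_iUnion.2 ?_⟩
  exact (he (π p)).imp fun n hn => hn.symm

end MartinsAxiom

section Condition

variable {G Ω : Type*} [Group G] [MulAction G Ω]

/-- The cyclically reduced words over `G` in one unknown. -/
abbrev ReducedWord (G : Type*) [One G] : Type _ :=
  {L : List (G × Bool) // CyclicallyReduced L}

variable (G) in
/-- A forcing condition for a generic permutation: a finite approximation `graph` from the family
`F`, with the promise to create no further closed paths along the words in `words`. Stronger
conditions are larger. -/
structure Condition (F : Set (Set (Ω × Ω))) where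
  graph : Set (Ω × Ω)
  graph_mem : graph ∈ F
  words : Finset (ReducedWord G)

namespace Condition

variable {F : Set (Set (Ω × Ω))}

instance : Preorder (Condition G F) where
  le c d := c.graph ⊆ d.graph ∧ c.words ⊆ d.words ∧
    ∀ L ∈ c.words, NoNewClosedPaths L.1 c.graph d.graph
  le_refl c := ⟨subset_rfl, subset_rfl, fun _ _ _ _ h => h⟩
  le_trans _ _ _ hcd hde := ⟨hcd.1.trans hde.1, hcd.2.1.trans hde.2.1,
    fun L hL P hP hPe => hcd.2.2 L hL P hP (hde.2.2 L (hcd.2.1 hL) P hP hPe)⟩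

theorem le_of_graph_eq {c d : Condition G F} (hg : c.graph = d.graph) (hw : c.words ⊆ d.words) :
    c ≤ d :=
  ⟨hg.subset, hw, fun _ _ _ _ h => hg ▸ h⟩

theorem centered_graph_fiber {G Ω : Type} [Group G] [MulAction G Ω] {F : Set (Set (Ω × Ω))}
    (p : F) : Centered ((fun c : Condition G F => (⟨c.graph, c.graph_mem⟩ : F)) ⁻¹' {p}) := by
  classical
  intro S hS
  refine ⟨⟨p, p.2, S.biUnion words⟩, fun c hc => le_of_graph_eq ?_ ?_⟩
  · exact congrArg Subtype.val (hS hc)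
  · exact Finset.subset_biUnion_of_mem words hc

theorem sigmaCentered {G Ω : Type} [Group G] [MulAction G Ω] [Countable Ω]
    {F : Set (Set (Ω × Ω))} (hne : F.Nonempty) (hF : ∀ p ∈ F, p.Finite) :
    SigmaCentered (Condition G F) := by
  have : Countable F := (Set.Countable.ofPred_finite.mono hF).to_subtype
  obtain ⟨p, hp⟩ := hne
  have : Nonempty (Condition G F) := ⟨⟨p, hp, ∅⟩⟩
  exact sigmaCentered_of_centered_fibers _ centered_graph_fiber

theorem isUpperSet_mem_endpoint_image (b : Bool) (a : Ω) :
    IsUpperSet {c : Condition G F | a ∈ endpoint b '' c.graph} :=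
  fun _ _ hcd hc => Set.image_mono hcd.1 hc

theorem isCofinal_mem_endpoint_image (hG : IsCofinitary G Ω) (hF : IsExtensible F) (b : Bool)
    (a : Ω) : IsCofinal {c : Condition G F | a ∈ endpoint b '' c.graph} := by
  intro c
  by_cases ha : a ∈ endpoint b '' c.graph
  · exact ⟨c, ha, le_rfl⟩
  let D : Set Ω := insert a (⋃ b', endpoint b' '' c.graph)
  let letters : Set G := ⋃ L ∈ c.words, Prod.fst '' {l | l ∈ L.1}
  have hD : D.Finite :=
    (Set.finite_iUnion fun b' => (hF.finite _ c.graph_mem).image (endpoint b')).insert a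
  have hletters : letters.Finite :=
    c.words.finite_toSet.biUnion fun L _ => L.1.finite_toSet.image _
  obtain ⟨x, hx, hxD, hfresh⟩ :=
    hG.exists_isFresh hD hletters (hF.infinite _ c.graph_mem b a ha)
  refine ⟨⟨_, hx, c.words⟩, ⟨_, Set.mem_insert _ _, endpoint_edge b a x⟩,
    Set.subset_insert _ _, subset_rfl, fun L hL P hP hPx => ?_⟩
  refine hP.mem_of_mem_insert L.2.get_finRotate_ne (Set.mem_insert _ _) hxD
    (fun e he b' => .inr (Set.mem_iUnion.2 ⟨b', e, he, rfl⟩)) (fun i => hfresh _ ?_) hPx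
  exact Set.mem_biUnion hL ⟨_, List.get_mem _ _, rfl⟩

theorem isUpperSet_mem_words (L : ReducedWord G) :
    IsUpperSet {c : Condition G F | L ∈ c.words} :=
  fun _ _ hcd hc => hcd.2.1 hc

theorem isCofinal_mem_words (L : ReducedWord G) :
    IsCofinal {c : Condition G F | L ∈ c.words} := by
  classical
  intro c
  exact ⟨⟨c.graph, c.graph_mem, insert L c.words⟩, Finset.mem_insert_self _ _,
    le_of_graph_eq rfl (Finset.subset_insert _ _)⟩

end Condition

theorem mk_reducedWord_lt_continuum {G : Type} [One G] (hG : #G < 𝔠) : #(ReducedWord G) < 𝔠 := by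
  have hletters : #(G × Bool) < 𝔠 := by
    simpa using mul_lt_of_lt aleph0_le_continuum hG (nat_lt_continuum 2)
  exact (mk_subtype_le _).trans_lt <|
    (mk_list_le_max _).trans_lt (max_lt aleph0_lt_continuum hletters)

theorem Condition.exists_generic (hMA : MASigmaCentered) {G Ω : Type} [Group G] [MulAction G Ω]
    [Countable Ω] {F : Set (Set (Ω × Ω))} (hG : IsCofinitary G Ω) (hGc : #G < 𝔠)
    (hF : IsExtensible F) :
    ∃ Q : Set (Condition G F), Q.Nonempty ∧ DirectedOn (· ≤ ·) Q ∧
      (∀ b a, ∃ c ∈ Q, a ∈ endpoint b '' c.graph) ∧ ∀ L, ∃ c ∈ Q, L ∈ c.words := by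
  have hindex : #((Bool × Ω) ⊕ ReducedWord G) < 𝔠 := by
    rw [mk_sum, lift_id, lift_id]
    exact add_lt_of_lt aleph0_le_continuum (mk_le_aleph0.trans_lt aleph0_lt_continuum)
      (mk_reducedWord_lt_continuum hGc)
  obtain ⟨p, hp⟩ := hF.nonempty
  have : Nonempty (Condition G F) := ⟨⟨p, hp, ∅⟩⟩
  obtain ⟨Q, hne, hdir, hQ⟩ := hMA.exists_generic (sigmaCentered (G := G) ⟨p, hp⟩ hF.finite) hindex
    (D := Sum.elim (fun i => {c | i.2 ∈ endpoint i.1 '' c.graph}) fun L => {c | L ∈ c.words})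
    (Sum.forall.2 ⟨fun _ => isUpperSet_mem_endpoint_image _ _, isUpperSet_mem_words⟩)
    (Sum.forall.2 ⟨fun _ => isCofinal_mem_endpoint_image hG hF _ _, isCofinal_mem_words⟩)
  exact ⟨Q, hne, hdir, fun b a => hQ (.inl (b, a)), fun L => hQ (.inr L)⟩

end Condition

section Generic

theorem exists_perm_graph_eq {Ω : Type*} {R : Set (Ω × Ω)}
    (hR : ∀ b, Set.BijOn (endpoint b) R Set.univ) :
    ∃ f : Equiv.Perm Ω, Function.graph f = R := by
  let e (b : Bool) : R ≃ Ω := ((hR b).equiv _).trans (Equiv.Set.univ Ω)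
  refine ⟨(e true).symm.trans (e false), Set.ext fun ⟨x, y⟩ => ⟨?_, fun h => ?_⟩⟩
  · rintro rfl
    have hx : ((e true).symm x : Ω × Ω) = (x, e false ((e true).symm x)) :=
      Prod.ext ((e true).apply_symm_apply x) rfl
    exact hx ▸ Subtype.coe_prop _
  · exact congrArg (e false) ((e true).symm_apply_eq.2 rfl : (e true).symm x = ⟨(x, y), h⟩)

theorem exists_perm_forall_noNewClosedPaths (hMA : MASigmaCentered) {G Ω : Type} [Group G]
    [MulAction G Ω] [Countable Ω] {F : Set (Set (Ω × Ω))} (hG : IsCofinitary G Ω) (hGc : #G < 𝔠)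
    (hF : IsExtensible F) :
    ∃ f : Equiv.Perm Ω, IsLocallyIn f F ∧ ∀ L : List (G × Bool), CyclicallyReduced L →
      ∃ p ∈ F, NoNewClosedPaths L p (Function.graph f) := by
  obtain ⟨Q, hne, hdir, hedges, hwords⟩ := Condition.exists_generic hMA hG hGc hF
  let R : Set (Ω × Ω) := ⋃ c ∈ Q, c.graph
  have exists_subset {s : Set (Ω × Ω)} (hs : s.Finite) (hsR : s ⊆ R) : ∃ c ∈ Q, s ⊆ c.graph := by
    lift s to Finset (Ω × Ω) using hs
    exact DirectedOn.exists_mem_subset_of_finset_subset_biUnion hne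
      (hdir.mono fun _ _ hcd => hcd.1) hsR
  have hbij (b : Bool) : Set.BijOn (endpoint b) R Set.univ := by
    refine ⟨Set.mapsTo_univ _ _, fun x hx y hy hxy => ?_, fun a _ => ?_⟩
    · obtain ⟨c, -, hc⟩ := exists_subset (Set.toFinite {x, y}) (Set.pair_subset hx hy)
      exact hF.injOn _ c.graph_mem b (hc (by simp)) (hc (by simp)) hxy
    · obtain ⟨c, hc, e, he, rfl⟩ := hedges b a
      exact ⟨e, Set.mem_biUnion hc he, rfl⟩
  obtain ⟨f, hf⟩ := exists_perm_graph_eq hbij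
  refine ⟨f, fun D hD => ?_, fun L hL => ?_⟩
  · obtain ⟨c, hc, hDc⟩ := exists_subset (hD.image fun a => (a, f a))
      (hf ▸ Set.image_subset_iff.2 fun a _ => rfl)
    exact ⟨c.graph, c.graph_mem, hf ▸ Set.subset_biUnion_of_mem hc, Set.image_subset_iff.1 hDc⟩
  · obtain ⟨c, hc, hLc⟩ := hwords ⟨L, hL⟩
    refine ⟨c.graph, c.graph_mem, fun P hP hPf => ?_⟩
    obtain ⟨d, hd, hPd⟩ := exists_subset (Set.finite_range P) (hf ▸ Set.range_subset_iff.2 hPf)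
    obtain ⟨e, -, hce, hde⟩ := hdir c hc d hd
    exact hce.2.2 _ hLc P hP fun i => hde.1 (hPd (Set.mem_range_self i))

theorem exists_isLocallyIn_isCofinitary_closure_insert (hMA : MASigmaCentered) {Ω : Type}
    [Countable Ω] {G : Subgroup (Equiv.Perm Ω)} (hG : IsCofinitary G Ω) (hGc : #G < 𝔠)
    {F : Set (Set (Ω × Ω))} (hF : IsExtensible F) :
    ∃ f : Equiv.Perm Ω, IsLocallyIn f F ∧
      IsCofinitary (Subgroup.closure (insert f (G : Set (Equiv.Perm Ω)))) Ω := by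
  obtain ⟨f, hfF, hf⟩ := exists_perm_forall_noNewClosedPaths hMA hG hGc hF
  refine ⟨f, hfF, isCofinitary_subgroup_iff.2 fun k hk hk1 => ?_⟩
  rcases isConj_mem_or_cyclicallyReduced_of_mem_closure_insert hk with
    ⟨g, hg, hgk⟩ | ⟨L, hL, hLred, hLk⟩
  · refine finite_fixedBy_of_isConj hgk (isCofinitary_subgroup_iff.1 hG g hg ?_)
    rintro rfl
    exact hk1 (isConj_one_right.1 hgk)
  · obtain ⟨p, hp, hpf⟩ := hf L hLred
    exact finite_fixedBy_of_isConj hLk (hpf.finite_fixedBy_evalWord (hF.finite p hp) hL)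

end Generic

section TransfiniteConstruction

theorem exists_transfinite_sequence {T α : Type*} [Preorder T] [WellFoundedLT T] [Nonempty α]
    (R : T → Set α → α → Prop) :
    ∃ g : T → α, ∀ t, (∃ x, R t (g '' Set.Iio t) x) → R t (g '' Set.Iio t) (g t) := by
  let next (t : T) (prev : ∀ s, s < t → α) : α :=
    Classical.epsilon (R t (Set.range fun s : Set.Iio t => prev s s.2))
  let g : T → α := wellFounded_lt.fix next
  have hg (t : T) : g t = Classical.epsilon (R t (g '' Set.Iio t)) := by
    rw [Set.image_eq_range]
    exact wellFounded_lt.fix_eq next t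
  refine ⟨g, fun t ht => ?_⟩
  rw [hg t]
  exact Classical.epsilon_spec ht

theorem exists_mem_closure_image_Iic {K T : Type*} [Group K] [LinearOrder T] {g : T → K}
    {s : Set T} {k : K} (hk : k ∈ Subgroup.closure (g '' s)) (hk1 : k ≠ 1) :
    ∃ t ∈ s, k ∈ Subgroup.closure (g '' Set.Iic t) := by
  rcases s.eq_empty_or_nonempty with rfl | ⟨t₀, ht₀⟩
  · simp [hk1] at hk
  have hmono : Monotone fun t => Subgroup.closure (g '' Set.Iic t) := fun _ _ h =>
    Subgroup.closure_mono (Set.image_mono (Set.Iic_subset_Iic.2 h))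
  have hle : Subgroup.closure (g '' s) ≤ ⨆ t ∈ s, Subgroup.closure (g '' Set.Iic t) :=
    (Subgroup.closure_le _).2 <| Set.image_subset_iff.2 fun t ht =>
      Subgroup.mem_iSup_of_mem t <| Subgroup.mem_iSup_of_mem ht <|
        Subgroup.subset_closure ⟨t, Set.self_mem_Iic, rfl⟩
  refine (Subgroup.mem_biSup_of_directedOn ht₀ fun x hx y hy => ?_).1 (hle hk)
  exact ⟨max x y, max_rec' (· ∈ s) hx hy, hmono (le_max_left x y), hmono (le_max_right x y)⟩

theorem mk_closure_lt {K : Type*} [Group K] {X : Set K} {κ : Cardinal} (hκ : ℵ₀ < κ)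
    (hX : #X < κ) : #(Subgroup.closure X) < κ := by
  have hle : #(Subgroup.closure X) ≤ #(FreeGroup X) := by
    rw [← Subtype.range_coe (s := X), ← FreeGroup.range_lift_eq_closure, Subtype.range_coe]
    exact mk_le_of_surjective (MonoidHom.rangeRestrict_surjective _)
  rcases isEmpty_or_nonempty X with _ | _
  · exact hle.trans_lt (mk_le_aleph0.trans_lt hκ)
  · exact hle.trans_lt (mk_freeGroup X ▸ max_lt hX hκ)

theorem exists_subgroup_subset_forall_exists_mem {K T : Type u} [Group K] {κ : Cardinal.{u}}
    (hκ : ℵ₀ < κ) (hT : #T ≤ κ) {A : Set K} (hA : 1 ∈ A) (S : T → Set K)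
    (step : ∀ t (G : Subgroup K), #G < κ → (G : Set K) ⊆ A →
      ∃ f ∈ S t, (Subgroup.closure (insert f (G : Set K)) : Set K) ⊆ A) :
    ∃ G : Subgroup K, (G : Set K) ⊆ A ∧ ∀ t, ∃ f ∈ S t, f ∈ G := by
  obtain ⟨_, _, hord⟩ := exists_ord_eq_type_lt T
  obtain ⟨g, hg⟩ := exists_transfinite_sequence fun t (X : Set K) f =>
    f ∈ S t ∧ (Subgroup.closure (insert f X) : Set K) ⊆ A
  have closure_subset {s : Set T} (hs : ∀ t ∈ s, (Subgroup.closure (g '' Set.Iic t) : Set K) ⊆ A) :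
      (Subgroup.closure (g '' s) : Set K) ⊆ A := by
    intro k hk
    by_cases hk1 : k = 1
    · rwa [hk1]
    · obtain ⟨t, ht, hkt⟩ := exists_mem_closure_image_Iic hk hk1
      exact hs t ht hkt
  have key (t : T) : g t ∈ S t ∧ (Subgroup.closure (g '' Set.Iic t) : Set K) ⊆ A := by
    induction t using WellFoundedLT.induction with
    | ind t ih =>
    have hcard : #(Subgroup.closure (g '' Set.Iio t)) < κ :=
      mk_closure_lt hκ (mk_image_le.trans_lt ((mk_Iio_lt t hord).trans_le hT))
    obtain ⟨f, hfS, hf⟩ := step t _ hcard (closure_subset fun s hs => (ih s hs).2)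
    rw [← Set.Iio_insert, Set.image_insert_eq]
    exact hg t ⟨f, hfS, subset_trans (Subgroup.closure_mono
      (Set.insert_subset_insert Subgroup.subset_closure)) hf⟩
  refine ⟨Subgroup.closure (g '' Set.univ), closure_subset fun t _ => (key t).2, fun t => ?_⟩
  exact ⟨g t, (key t).1, Subgroup.subset_closure ⟨t, Set.mem_univ t, rfl⟩⟩

theorem mk_isExtensible_le_continuum {Ω : Type*} [Countable Ω] :
    #{F : Set (Set (Ω × Ω)) // IsExtensible F} ≤ 𝔠 := by
  have hsub : {F | IsExtensible F} ⊆ 𝒫 {p : Set (Ω × Ω) | p.Finite} := fun F hF => hF.finite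
  calc #{F : Set (Set (Ω × Ω)) // IsExtensible F}
      ≤ #(𝒫 {p : Set (Ω × Ω) | p.Finite}) := mk_le_mk_of_subset hsub
    _ = 2 ^ #{p : Set (Ω × Ω) | p.Finite} := mk_powerset _
    _ ≤ 2 ^ ℵ₀ := power_le_power_left two_ne_zero Set.Countable.ofPred_finite.le_aleph0
    _ = 𝔠 := two_power_aleph0

theorem exists_isCofinitary_forall_isExtensible (hMA : MASigmaCentered) (Ω : Type) [Countable Ω] :
    ∃ G : Subgroup (Equiv.Perm Ω), IsCofinitary G Ω ∧
      ∀ F, IsExtensible F → ∃ f ∈ G, IsLocallyIn f F := by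
  let A : Set (Equiv.Perm Ω) := {k | k ≠ 1 → (fixedBy Ω k).Finite}
  have hA (G : Subgroup (Equiv.Perm Ω)) : IsCofinitary G Ω ↔ (G : Set (Equiv.Perm Ω)) ⊆ A :=
    isCofinitary_subgroup_iff
  have hA1 : 1 ∈ A := fun h => (h rfl).elim
  obtain ⟨G, hG, hmem⟩ := exists_subgroup_subset_forall_exists_mem aleph0_lt_continuum
    (mk_isExtensible_le_continuum (Ω := Ω)) hA1 (fun F => {f | IsLocallyIn f F.1})
    fun F G hcard hG => by
      simp only [← hA] at hG ⊢
      exact exists_isLocallyIn_isCofinitary_closure_insert hMA hG hcard F.2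
  exact ⟨G, (hA G).2 hG, fun F hF => (hmem ⟨F, hF⟩).imp fun _ => And.symm⟩

end TransfiniteConstruction

section Isomorphism

variable {Ω I : Type} {ar : I → ℕ} {M M' M'' : RelStruct Ω I ar}

theorem IsIso.mul {g h : Equiv.Perm Ω} (hh : IsIso h M' M'') (hg : IsIso g M M') :
    IsIso (h * g) M M'' :=
  fun i t => (hh i fun k => g (t k)).trans (hg i t)

theorem isIso_of_forall_finite_exists {f : Equiv.Perm Ω}
    (h : ∀ D : Set Ω, D.Finite → ∃ g, IsIso g M M' ∧ ∀ a ∈ D, g a = f a) : IsIso f M M' := by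
  intro i t
  obtain ⟨g, hg, hgf⟩ := h (Set.range t) (Set.finite_range t)
  rw [← hg i t, funext fun k => hgf (t k) (Set.mem_range_self k)]

theorem FlexibleWitness.isIso_of_isLocallyIn {F : Set (Set (Ω × Ω))}
    (hF : FlexibleWitness {g | IsIso g M M} F) {k f : Equiv.Perm Ω} (hk : IsIso k M M')
    (hf : IsLocallyIn f ((Prod.map (1 : Equiv.Perm Ω) k '' ·) '' F)) : IsIso f M M' := by
  refine isIso_of_forall_finite_exists fun D hD => ?_
  obtain ⟨-, ⟨p, hp, rfl⟩, -, hDf⟩ := hf D hD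
  obtain ⟨g, hg, hpg⟩ := hF.2.1 p hp
  refine ⟨k * g, hk.mul hg, fun a ha => ?_⟩
  obtain ⟨⟨x, y⟩, hxy, heq⟩ := hDf a ha
  obtain ⟨rfl, hky⟩ := Prod.ext_iff.1 heq
  exact (congrArg k (hpg _ hxy)).trans hky

end Isomorphism

/-- (MA(σ-centered)) There is a proper subgroup `G` of `Sym(Ω)` (Ω countably infinite), dense
in the topology of pointwise convergence, such that for every pair of isomorphic inductively
flexible structures `M, M'` with universe `Ω` some `f ∈ G` is an isomorphism from `M` to `M'`
(in particular `G` acts transitively on the isomorphism class of any inductively flexible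
structure). -/
theorem stmt_10 (Ω : Type) [Countable Ω] [Infinite Ω] (hMA : MASigmaCentered) :
    ∃ G : Subgroup (Equiv.Perm Ω), G ≠ ⊤ ∧
      (∀ h : Equiv.Perm Ω, ∀ S : Finset Ω, ∃ g ∈ G, ∀ a ∈ S, g a = h a) ∧
      ∀ (I : Type) (ar : I → ℕ) (M M' : RelStruct Ω I ar),
        InductivelyFlexible M → InductivelyFlexible M' →
        (∃ g : Equiv.Perm Ω, IsIso g M M') → ∃ f ∈ G, IsIso f M M' := by
  obtain ⟨G, hG, hmem⟩ := exists_isCofinitary_forall_isExtensible hMA Ω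
  refine ⟨G, ?proper, fun h S => ?dense, fun I ar M M' ⟨F, hF⟩ _ ⟨k, hk⟩ => ?iso⟩
  case proper =>
    rintro rfl
    exact not_isCofinitary_top Ω hG
  case dense =>
    have hS : (fun a => (a, h a)) '' (S : Set Ω) ⊆ Function.graph h :=
      Set.image_subset_iff.2 fun _ _ => rfl
    obtain ⟨f, hf, hfF⟩ := hmem _ <| isExtensible_finite_injOn.sep_superset
      ⟨S.finite_toSet.image _, fun b => (injOn_endpoint_graph h b).mono hS⟩
    obtain ⟨p, ⟨-, hSp⟩, hpf, -⟩ := hfF ∅ Set.finite_empty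
    exact ⟨f, hf, fun a ha => hpf (hSp (Set.mem_image_of_mem _ ha))⟩
  case iso =>
    obtain ⟨f, hf, hfF⟩ := hmem _ (hF.isExtensible.image_prodMap 1 k)
    exact ⟨f, hf, hF.isIso_of_isLocallyIn hk hfF⟩
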